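/- Let T be a ℂ-linear triangulated category of finite type with split-generator G, and let F₁, F₂ be triangulated endofunctors of T such that (F₁F₂)ⁿG ≇ 0 and (F₂F₁)ⁿG ≇ 0 for all n ≥ 0. Then h_t(F₁F₂) = h_t(F₂F₁) for all t ∈ ℝ. -/

import Mathlib

open CategoryTheory Limits Pretriangulated Filter
open scoped ENNReal

universe u v u₂ v₂

namespace CatEntropy

section Defs

variable (C : Type u) [Category.{v} C] [Preadditive C] [HasZeroObject C]
  [HasShift C ℤ] [∀ n : ℤ, (shiftFunctor C n).Additive] [Pretriangulated C]

/-- `C` is of finite type: for all objects `M, N`, the total dimension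
`Σ_{n ∈ ℤ} dim_ℂ Hom(M, N⟦n⟧)` is finite. -/
def IsFiniteType [Linear ℂ C] : Prop :=
  ∀ M N : C, {n : ℤ | ¬ Subsingleton (M ⟶ N⟦n⟧)}.Finite ∧
    ∀ n : ℤ, FiniteDimensional ℂ (M ⟶ N⟦n⟧)

/-- A set of objects is a thick triangulated subcategory: closed under isomorphisms,
shifts, cones and direct summands. -/
structure IsThick (S : Set C) : Prop where
  mem_of_iso : ∀ {X Y : C}, (X ≅ Y) → X ∈ S → Y ∈ S
  shift_mem : ∀ (X : C) (n : ℤ), X ∈ S → X⟦n⟧ ∈ S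
  cone_mem : ∀ (T : Triangle C), T ∈ (distTriang C) → T.obj₁ ∈ S → T.obj₂ ∈ S → T.obj₃ ∈ S
  summand_mem : ∀ (X Y : C), (X ⊞ Y) ∈ S → X ∈ S

/-- `⟨M⟩`, the smallest thick triangulated subcategory containing `M`. -/
def thickClosure (M : C) : Set C :=
  ⋂₀ {S : Set C | IsThick C S ∧ M ∈ S}

/-- `G` is a split-generator of `C` if `⟨G⟩ = C`. -/
def IsSplitGenerator (G : C) : Prop := ∀ X : C, X ∈ thickClosure C G

open Classical in
/-- The complexity `δ_{C,t}(M, N)` of `N` with respect to `M`. -/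
noncomputable def complexity (t : ℝ) (M N : C) : ℝ≥0∞ :=
  if IsZero N then 0
  else if N ∈ thickClosure C M then
    sInf {c : ℝ≥0∞ |
      ∃ (p : ℕ) (_ : 0 < p) (n : Fin p → ℤ) (A : Fin (p + 1) → C) (N' : C),
        IsZero (A 0) ∧ Nonempty (A (Fin.last p) ≅ N ⊞ N') ∧
        (∀ i : Fin p,
          ∃ (f : A i.castSucc ⟶ A i.succ) (g : A i.succ ⟶ M⟦n i⟧)
            (h : M⟦n i⟧ ⟶ (A i.castSucc)⟦(1 : ℤ)⟧),
              Triangle.mk f g h ∈ (distTriang C)) ∧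
        c = ∑ i : Fin p, ENNReal.ofReal (Real.exp ((n i : ℝ) * t))}
  else ⊤

/-- Iterated composition `Fⁿ` of an endofunctor. -/
def iter (F : C ⥤ C) : ℕ → C ⥤ C
  | 0 => 𝟭 C
  | n + 1 => iter F n ⋙ F

/-- The entropy `h_t(F)` of an endofunctor `F`, computed with the split-generator `G`
(the defining limit exists and agrees with the `limsup` used here). -/
noncomputable def entropy (F : C ⥤ C) (G : C) (t : ℝ) : EReal :=
  Filter.atTop.limsup fun m : ℕ =>
    (((m : ℝ)⁻¹ : ℝ) : EReal) * (complexity C t G ((iter C F m).obj G)).log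

end Defs

/-!
Since `(F₁F₂)ⁿ⁺¹ = F₁ (F₂F₁)ⁿ F₂`, the submultiplicativity
`δ(L, N) ≤ δ(L, M) δ(M, N)` and `δ(F M, F N) ≤ δ(M, N)` bound `δ(G, (F₁F₂)ⁿ⁺¹ G)` by the constant
`δ(G, F₁ G) δ(G, F₂ G)` times `δ(G, (F₂F₁)ⁿ G)`. Constant factors and an index shift do not affect
the exponential growth rate, so `h_t(F₁F₂) ≤ h_t(F₂F₁)`, and the situation is symmetric.

Submultiplicativity requires iterated extensions to be re-bracketed. This is usually read off the
octahedral axiom, which `Pretriangulated` does not include; for a category of finite type, its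
consequence for objects holds anyway. Long exact sequences show that the two objects to be
identified have `Hom(T, -)` of the same dimension for every `T`, and these dimensions determine an
object. Indeed, as `Hom(U⟦n⟧, A)` vanishes for large `n`, descending induction on shifts shows that
they determine the rank of `Hom(f, A)` for every morphism `f`. From equality of these ranks for `A`
and `B` one gets morphisms `iⱼ : B ⟶ A` and `pⱼ : A ⟶ B` with `∑ iⱼ ≫ pⱼ = 𝟙 B`, hence a nonzero
common direct summand in the Karoubi envelope; it splits off by idempotent completeness, and one
concludes by induction on `dim End B`.
-/

section Algebra

theorem exists_isIdempotentElem_mul_of_not_isNilpotent_of_isArtinianRing {R : Type*} [CommRing R]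
    [IsArtinianRing R] {a : R} (ha : ¬ IsNilpotent a) :
    ∃ c, IsIdempotentElem (a * c) ∧ a * c ≠ 0 := by
  obtain ⟨n, hn⟩ := IsArtinian.range_smul_pow_stabilizes R a
  obtain ⟨d, hd⟩ : ∃ d, a ^ (2 * (n + 1)) * d = a ^ (n + 1) := by
    have hmem : a ^ (n + 1) ∈ LinearMap.range (a ^ (2 * (n + 1)) • LinearMap.id : R →ₗ[R] R) := by
      rw [← hn (2 * (n + 1)) (by lia), hn (n + 1) (by lia)]
      exact ⟨1, by simp⟩
    exact hmem
  refine ⟨a ^ n * d, ?_, fun h => ha ⟨n + 1, ?_⟩⟩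
  · calc a * (a ^ n * d) * (a * (a ^ n * d)) = a ^ (2 * (n + 1)) * d * d := by ring
      _ = a * (a ^ n * d) := by rw [hd]; ring
  · calc a ^ (n + 1) = a ^ (2 * (n + 1)) * d := hd.symm
      _ = a ^ (n + 1) * (a * (a ^ n * d)) := by ring
      _ = 0 := by rw [h, mul_zero]

open scoped IsMulCommutative in
theorem exists_isIdempotentElem_mul_of_not_isNilpotent (k : Type*) {R : Type*} [Field k] [Ring R]
    [Algebra k R] [Module.Finite k R] {a : R} (ha : ¬ IsNilpotent a) :
    ∃ c, IsIdempotentElem (a * c) ∧ a * c ≠ 0 := by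
  have : IsArtinianRing (Algebra.adjoin k {a}) := isArtinian_of_tower k inferInstance
  let a' : Algebra.adjoin k {a} := ⟨a, Algebra.self_mem_adjoin_singleton k a⟩
  obtain ⟨c, hc, hc0⟩ := exists_isIdempotentElem_mul_of_not_isNilpotent_of_isArtinianRing (a := a')
    fun h => ha (h.map (Algebra.adjoin k {a}).val)
  exact ⟨c, congrArg Subtype.val hc, fun h => hc0 (Subtype.ext h)⟩

theorem exists_not_isNilpotent_mul_of_sum_eq_one {R ι : Type*} [Ring R] [Nontrivial R]
    {s : Finset ι} {u : ι → R} (hu : ∑ j ∈ s, u j = 1) : ∃ j y, ¬ IsNilpotent (y * u j) := by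
  by_contra! h
  have hJ (j : ι) : u j ∈ Ideal.jacobson (⊥ : Ideal R) := Ideal.mem_jacobson_iff.2 fun y => by
    obtain ⟨z, hz⟩ := (h j y).isUnit_one_add.exists_left_inv
    exact ⟨z, by rw [Ideal.mem_bot, ← hz]; noncomm_ring⟩
  have htop : Ideal.jacobson (⊥ : Ideal R) = ⊤ :=
    (Ideal.eq_top_iff_one _).2 (hu ▸ Submodule.sum_mem _ fun j _ => hJ j)
  exact bot_ne_top (Ideal.jacobson_eq_top_iff.1 htop)

end Algebra

section LinearAlgebra

open Module LinearMap

variable {k : Type*} [Field k] {M₀ M₁ M₂ M₃ M₄ : Type*} [AddCommGroup M₀] [Module k M₀]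
  [AddCommGroup M₁] [Module k M₁] [AddCommGroup M₂] [Module k M₂] [AddCommGroup M₃] [Module k M₃]
  [AddCommGroup M₄] [Module k M₄]

theorem finrank_range_add_finrank_range_of_exact [Module.Finite k M₁] {f : M₀ →ₗ[k] M₁}
    {g : M₁ →ₗ[k] M₂} (h : Function.Exact f g) :
    finrank k (range f) + finrank k (range g) = finrank k M₁ := by
  rw [← h.linearMap_ker_eq, add_comm, finrank_range_add_finrank_ker]

theorem finrank_add_finrank_range_of_exact [Module.Finite k M₁] [Module.Finite k M₂]
    [Module.Finite k M₃] {f₀ : M₀ →ₗ[k] M₁} {f₁ : M₁ →ₗ[k] M₂} {f₂ : M₂ →ₗ[k] M₃}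
    {f₃ : M₃ →ₗ[k] M₄} (h₁ : Function.Exact f₀ f₁) (h₂ : Function.Exact f₁ f₂)
    (h₃ : Function.Exact f₂ f₃) :
    finrank k M₂ + finrank k (range f₀) + finrank k (range f₃) = finrank k M₁ + finrank k M₃ := by
  have e₁ := finrank_range_add_finrank_range_of_exact h₁
  have e₂ := finrank_range_add_finrank_range_of_exact h₂
  have e₃ := finrank_range_add_finrank_range_of_exact h₃
  lia

theorem finrank_range_comp_add [Module.Finite k M₁] (f : M₀ →ₗ[k] M₁) (g : M₁ →ₗ[k] M₂) :
    finrank k (range (g ∘ₗ f)) + finrank k (range f ⊓ ker g : Submodule k M₁) =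
      finrank k (range f) := by
  rw [← finrank_range_add_finrank_ker (g.domRestrict (range f)), range_comp, range_domRestrict,
    ker_domRestrict, ← Submodule.finrank_map_subtype_eq, Submodule.map_comap_subtype]

theorem finrank_range_comp_add_finrank_range_of_exact [Module.Finite k M₂] {g : M₀ →ₗ[k] M₂}
    {h : M₂ →ₗ[k] M₃} {a : M₁ →ₗ[k] M₂} {b : M₂ →ₗ[k] M₄} (hgh : Function.Exact g h)
    (hab : Function.Exact a b) :
    finrank k (range (b ∘ₗ g)) + finrank k (range a) =
      finrank k (range (h ∘ₗ a)) + finrank k (range g) := by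
  have h₁ := finrank_range_comp_add g b
  have h₂ := finrank_range_comp_add a h
  rw [hab.linearMap_ker_eq] at h₁
  rw [hgh.linearMap_ker_eq, inf_comm] at h₂
  lia

theorem finrank_range_prodMap [Module.Finite k M₁] [Module.Finite k M₃] (f : M₀ →ₗ[k] M₁)
    (g : M₂ →ₗ[k] M₃) :
    finrank k (range (f.prodMap g)) = finrank k (range f) + finrank k (range g) := by
  have hinj : Function.Injective ((range f).subtype.prodMap (range g).subtype) :=
    (range f).injective_subtype.prodMap (range g).injective_subtype
  rw [← finrank_prod, ← finrank_range_of_inj hinj, range_prodMap, range_prodMap,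
    Submodule.range_subtype, Submodule.range_subtype]

end LinearAlgebra

section HomFinite

open Module
open LinearMap (range)

/-- A `k`-linear category is Hom-finite if all its spaces of morphisms are finite-dimensional. -/
class HomFinite (k : Type*) (D : Type*) [Field k] [Category* D] [Preadditive D] [Linear k D] :
    Prop where
  finite (X Y : D) : Module.Finite k (X ⟶ Y)

attribute [instance] HomFinite.finite

variable (k : Type*) [Field k] {D : Type*} [Category* D] [Preadditive D] [Linear k D]

/-- The rank of the linear map `Hom(V, X) → Hom(U, X)` given by composition with `f : U ⟶ V`. -/
noncomputable def precompRank {U V : D} (f : U ⟶ V) (X : D) : ℕ :=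
  finrank k (range (Linear.leftComp k X f))

/-- The rank of the linear map `Hom(X, U) → Hom(X, V)` given by composition with `f : U ⟶ V`. -/
noncomputable def postcompRank (X : D) {U V : D} (f : U ⟶ V) : ℕ :=
  finrank k (range (Linear.rightComp k X f))

/-- Two objects have equal ranks if every morphism `f` induces linear maps `Hom(f, A)` and
`Hom(f, B)` of the same rank; taking `f = 𝟙 U` one recovers the dimensions of the spaces
`Hom(U, A)` and `Hom(U, B)`. -/
def EqualRanks (A B : D) : Prop :=
  ∀ ⦃U V : D⦄ (f : U ⟶ V), precompRank k f A = precompRank k f B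

theorem precompRank_id (U X : D) : precompRank k (𝟙 U) X = finrank k (U ⟶ X) := by
  have : Linear.leftComp k X (𝟙 U) = LinearMap.id := by ext; simp
  rw [precompRank, this, LinearMap.range_id, finrank_top]

variable {k}

theorem EqualRanks.finrank_hom_eq {A B : D} (h : EqualRanks k A B) (U : D) :
    finrank k (U ⟶ A) = finrank k (U ⟶ B) := by
  rw [← precompRank_id, ← precompRank_id, h]

theorem precompRank_congr {X Y : D} (e : X ≅ Y) {U V : D} (f : U ⟶ V) :
    precompRank k f X = precompRank k f Y := by
  have : Linear.leftComp k Y f ∘ₗ (Linear.homCongr k (Iso.refl V) e).toLinearMap =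
      (Linear.homCongr k (Iso.refl U) e).toLinearMap ∘ₗ Linear.leftComp k X f := by
    ext; simp [Linear.homCongr_apply]
  rw [precompRank, precompRank, ← (Linear.homCongr k (Iso.refl U) e).finrank_map_eq,
    ← LinearMap.range_comp, ← this, LinearMap.range_comp_of_range_eq_top _ (LinearEquiv.range _)]

theorem EqualRanks.of_iso {A A' B B' : D} (h : EqualRanks k A B) (eA : A ≅ A') (eB : B ≅ B') :
    EqualRanks k A' B' := fun U V f => by
  rw [← precompRank_congr eA, ← precompRank_congr eB, h]

variable [HomFinite k D]

theorem precompRank_eq_finrank_iff {U V X : D} {f : U ⟶ V} :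
    precompRank k f X = finrank k (U ⟶ X) ↔ ∀ x : U ⟶ X, ∃ y : V ⟶ X, f ≫ y = x := by
  change _ ↔ Function.Surjective (Linear.leftComp k X f)
  rw [← LinearMap.range_eq_top]
  refine ⟨fun h => Submodule.eq_top_of_finrank_eq h, fun h => ?_⟩
  rw [precompRank, h, finrank_top]

theorem precompRank_biprod {X Y : D} [HasBinaryBiproduct X Y] {U V : D} (f : U ⟶ V) :
    precompRank k f (X ⊞ Y) = precompRank k f X + precompRank k f Y := by
  let e (U : D) : (U ⟶ X ⊞ Y) ≃ₗ[k] (U ⟶ X) × (U ⟶ Y) :=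
    { toFun g := (g ≫ biprod.fst, g ≫ biprod.snd)
      invFun g := biprod.lift g.1 g.2
      map_add' := by simp
      map_smul' := by simp
      left_inv g := by ext <;> simp
      right_inv g := by simp }
  have : (Linear.leftComp k X f).prodMap (Linear.leftComp k Y f) ∘ₗ (e V).toLinearMap =
      (e U).toLinearMap ∘ₗ Linear.leftComp k (X ⊞ Y) f := by
    ext <;> simp [e]
  rw [precompRank, precompRank, precompRank, ← finrank_range_prodMap, ← (e U).finrank_map_eq,
    ← LinearMap.range_comp, ← this, LinearMap.range_comp_of_range_eq_top _ (LinearEquiv.range _)]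

theorem EqualRanks.of_biprod {S A B : D} [HasBinaryBiproduct S A] [HasBinaryBiproduct S B]
    (h : EqualRanks k (S ⊞ A) (S ⊞ B)) : EqualRanks k A B := fun U V f => by
  have := h f
  rwa [precompRank_biprod, precompRank_biprod, Nat.add_left_cancel_iff] at this

theorem EqualRanks.exists_comp_eq {A B : D} (h : EqualRanks k A B) {U V : D} {f : U ⟶ V}
    (hf : ∀ x : U ⟶ A, ∃ y, f ≫ y = x) (x : U ⟶ B) : ∃ y, f ≫ y = x := by
  refine (precompRank_eq_finrank_iff (k := k)).1 ?_ x
  rw [← h f, precompRank_eq_finrank_iff.2 hf, h.finrank_hom_eq]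

/-- The morphism from `B` to a power of `A` whose components form a basis of `Hom(B, A)` is
universal among the morphisms from `B` to `A`; as ranks are equal, it splits. -/
theorem EqualRanks.exists_sum_comp_eq_id [HasFiniteBiproducts D] {A B : D}
    (h : EqualRanks k A B) :
    ∃ (n : ℕ) (i : Fin n → (B ⟶ A)) (p : Fin n → (A ⟶ B)), ∑ j, i j ≫ p j = 𝟙 B := by
  let b := finBasis k (B ⟶ A)
  let φ : B ⟶ ⨁ fun _ : Fin (finrank k (B ⟶ A)) => A := biproduct.lift b
  obtain ⟨y, hy⟩ := h.exists_comp_eq (f := φ)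
    (fun x => ⟨biproduct.desc fun j => b.repr x j • 𝟙 A, by
      simp only [φ, biproduct.lift_desc, Linear.comp_smul, Category.comp_id, b.sum_repr]⟩) (𝟙 B)
  refine ⟨_, b, fun j => biproduct.ι (fun _ => A) j ≫ y, ?_⟩
  rw [← hy, ← biproduct.lift_desc]
  congr 1
  ext
  simp

theorem EqualRanks.exists_idempotent_ne_zero [HasFiniteBiproducts D] {A B : D}
    (h : EqualRanks k A B) (hB : ¬ IsZero B) :
    ∃ (s : B ⟶ A) (r : A ⟶ B), (s ≫ r) ≫ s ≫ r = s ≫ r ∧ s ≫ r ≠ 0 := by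
  have : Nontrivial (End B) := ⟨𝟙 B, 0, fun h₀ => hB ((IsZero.iff_id_eq_zero B).2 h₀)⟩
  have : Module.Finite k (End B) := HomFinite.finite B B
  obtain ⟨n, i, p, hip⟩ := h.exists_sum_comp_eq_id
  obtain ⟨j, y, hy⟩ := exists_not_isNilpotent_mul_of_sum_eq_one (R := End B)
    (u := fun j => i j ≫ p j) hip
  obtain ⟨c, hc, hc₀⟩ := exists_isIdempotentElem_mul_of_not_isNilpotent k hy
  have hfac : (y * End.of (i j ≫ p j)) * c = (c ≫ i j) ≫ p j ≫ y := by
    simp only [End.mul_def, End.of, Category.assoc]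
  rw [hfac] at hc hc₀
  exact ⟨c ≫ i j, p j ≫ y, hc, hc₀⟩

theorem EqualRanks.exists_common_retract [HasFiniteBiproducts D] [IsIdempotentComplete D] {A B : D}
    (h : EqualRanks k A B) (hB : ¬ IsZero B) :
    ∃ S : D, ¬ IsZero S ∧ Nonempty (Retract S A) ∧ Nonempty (Retract S B) := by
  obtain ⟨s, r, hsr, hsr₀⟩ := h.exists_idempotent_ne_zero hB
  obtain ⟨S, ι, π, hιπ, hπι⟩ := IsIdempotentComplete.idempotents_split B (s ≫ r) hsr
  refine ⟨S, fun hS => hsr₀ ?_, ⟨⟨ι ≫ s, r ≫ π, ?_⟩⟩, ⟨⟨ι, π, hιπ⟩⟩⟩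
  · rw [← hπι, hS.eq_of_tgt π 0, zero_comp]
  · calc (ι ≫ s) ≫ r ≫ π = ι ≫ (s ≫ r) ≫ π := by simp only [Category.assoc]
      _ = 𝟙 S := by rw [← hπι, Category.assoc, hιπ, Category.comp_id, hιπ]

theorem nonempty_iso_biprod_of_retract [HasBinaryBiproducts D] [IsIdempotentComplete D] {S B : D}
    (h : Retract S B) : ∃ B', Nonempty (B ≅ S ⊞ B') := by
  obtain ⟨B', ι, π, hιπ, hπι⟩ := IsIdempotentComplete.idempotents_split B (𝟙 B - h.r ≫ h.i)
    (by simp [Preadditive.sub_comp, Preadditive.comp_sub])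
  have hι : ι ≫ h.r = 0 := by
    have : Mono h.i := h.splitMono.mono
    rw [← cancel_mono h.i]
    calc (ι ≫ h.r) ≫ h.i = ι ≫ (𝟙 B - π ≫ ι) := by simp [hπι]
      _ = 0 ≫ h.i := by simp [Preadditive.comp_sub, reassoc_of% hιπ]
  have hπ : h.i ≫ π = 0 := by
    calc h.i ≫ π = h.i ≫ (π ≫ ι) ≫ π := by simp [hιπ]
      _ = 0 := by simp [hπι, Preadditive.comp_sub]
  exact ⟨B', ⟨{
    hom := biprod.lift h.r π
    inv := biprod.desc h.i ι
    hom_inv_id := by simp [hπι]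
    inv_hom_id := by ext <;> simp [hι, hπ, hιπ] }⟩⟩

theorem finrank_end_eq_zero_iff {X : D} : finrank k (X ⟶ X) = 0 ↔ IsZero X := by
  rw [finrank_zero_iff, IsZero.iff_id_eq_zero]
  refine ⟨fun _ => Subsingleton.elim _ _, fun h => ⟨fun f g => ?_⟩⟩
  rw [← Category.comp_id f, ← Category.comp_id g, h, comp_zero, comp_zero]

theorem finrank_end_lt_of_iso_biprod {S B X : D} [HasBinaryBiproduct S B] (hS : ¬ IsZero S)
    (e : X ≅ S ⊞ B) : finrank k (B ⟶ B) < finrank k (X ⟶ X) := by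
  have hle : finrank k (B ⟶ B) ≤ finrank k (X ⟶ B) :=
    LinearMap.finrank_le_finrank_of_injective (f := Linear.leftComp k B (e.hom ≫ biprod.snd))
      fun f g hfg => (cancel_epi (e.hom ≫ biprod.snd)).1 hfg
  have hpos : 0 < finrank k (X ⟶ S) := by
    refine finrank_pos_iff_exists_ne_zero.2 ⟨e.hom ≫ biprod.fst, fun h₀ => hS ?_⟩
    rw [IsZero.iff_id_eq_zero, ← biprod.inl_fst (X := S) (Y := B),
      ← e.inv_hom_id_assoc biprod.fst, h₀, comp_zero, comp_zero]
  rw [(Linear.homCongr k (Iso.refl X) e).finrank_eq, ← precompRank_id k X,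
    precompRank_biprod, precompRank_id, precompRank_id]
  lia

theorem EqualRanks.nonempty_iso_of_isIdempotentComplete [HasFiniteBiproducts D]
    [IsIdempotentComplete D] {A B : D} (h : EqualRanks k A B) : Nonempty (A ≅ B) := by
  induction hn : finrank k (B ⟶ B) using Nat.strong_induction_on generalizing A B with
  | _ n ih =>
  by_cases hB : IsZero B
  · have hA : IsZero A := by
      rw [← finrank_end_eq_zero_iff (k := k), h.finrank_hom_eq]
      have : Subsingleton (A ⟶ B) := ⟨fun f g => hB.eq_of_tgt f g⟩
      exact finrank_zero_of_subsingleton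
    exact ⟨hA.iso hB⟩
  have := hasBinaryBiproducts_of_finite_biproducts D
  obtain ⟨S, hS, ⟨rA⟩, ⟨rB⟩⟩ := h.exists_common_retract hB
  obtain ⟨A', ⟨eA⟩⟩ := nonempty_iso_biprod_of_retract rA
  obtain ⟨B', ⟨eB⟩⟩ := nonempty_iso_biprod_of_retract rB
  obtain ⟨e⟩ := ih _ (hn ▸ finrank_end_lt_of_iso_biprod hS eB) (h.of_iso eA eB).of_biprod rfl
  exact ⟨eA ≪≫ biprod.mapIso (Iso.refl S) e ≪≫ eB.symm⟩

end HomFinite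

section Karoubi

open Idempotents
open LinearMap (range)

variable {k : Type*} [Field k] {D : Type*} [Category* D] [Preadditive D] [Linear k D]

instance (P Q : Karoubi D) : SMul k (P ⟶ Q) where
  smul a f := ⟨a • f.f, by simp⟩

@[simp]
theorem karoubi_smul_f {P Q : Karoubi D} (a : k) (f : P ⟶ Q) : (a • f).f = a • f.f := rfl

instance (P Q : Karoubi D) : Module k (P ⟶ Q) :=
  Function.Injective.module k (Karoubi.inclusionHom P Q) (fun _ _ h => Karoubi.hom_ext _ _ h)
    karoubi_smul_f

instance : Linear k (Karoubi D) where
  smul_comp _ _ _ a f g := by ext; simp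
  comp_smul _ _ _ f a g := by ext; simp

variable (k) in
/-- The inclusion of the morphisms of the Karoubi envelope into those of the category. -/
def karoubiHomInclusion (P Q : Karoubi D) : (P ⟶ Q) →ₗ[k] (P.X ⟶ Q.X) where
  toFun f := f.f
  map_add' _ _ := rfl
  map_smul' _ _ := rfl

theorem karoubiHomInclusion_injective (P Q : Karoubi D) :
    Function.Injective (karoubiHomInclusion k P Q) := fun _ _ h => Karoubi.hom_ext _ _ h

instance [HomFinite k D] : HomFinite k (Karoubi D) where
  finite P Q := Module.Finite.of_injective _ (karoubiHomInclusion_injective P Q)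

theorem precompRank_toKaroubi {P Q : Karoubi D} (f : P ⟶ Q) (A : D) :
    precompRank k f ((toKaroubi D).obj A) = precompRank k f.f A := by
  let e := karoubiHomInclusion k P ((toKaroubi D).obj A)
  have hrange : (range (Linear.leftComp k ((toKaroubi D).obj A) f)).map e =
      range (Linear.leftComp k A f.f) := by
    ext x
    constructor
    · rintro ⟨_, ⟨g, rfl⟩, rfl⟩
      exact ⟨g.f, rfl⟩
    · rintro ⟨g, rfl⟩
      exact ⟨_, ⟨⟨Q.p ≫ g, by simp⟩, rfl⟩, by simp [e, karoubiHomInclusion]⟩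
  rw [precompRank, precompRank, ← hrange]
  exact (Submodule.equivMapOfInjective e (karoubiHomInclusion_injective _ _) _).finrank_eq

theorem EqualRanks.nonempty_iso [HomFinite k D] [HasFiniteBiproducts D] {A B : D}
    (h : EqualRanks k A B) : Nonempty (A ≅ B) := by
  have hK : EqualRanks k ((toKaroubi D).obj A) ((toKaroubi D).obj B) := fun P Q f => by
    rw [precompRank_toKaroubi, precompRank_toKaroubi, h]
  exact hK.nonempty_iso_of_isIdempotentComplete.map (toKaroubi D).preimageIso

end Karoubi

section LongExactSequence

open Module

variable {k : Type*} [Field k] {C : Type*} [Category* C] [Preadditive C] [HasZeroObject C]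
  [HasShift C ℤ] [∀ n : ℤ, (shiftFunctor C n).Additive] [Pretriangulated C] [Linear k C]
  {Δ : Triangle C} (hΔ : Δ ∈ distTriang C) (T : C)

include hΔ

theorem exact_rightComp₂ : Function.Exact (Linear.rightComp k T Δ.mor₁)
    (Linear.rightComp k T Δ.mor₂) := fun x =>
  ⟨fun hx => (Triangle.coyoneda_exact₂ Δ hΔ x hx).imp fun _ => Eq.symm, by
    rintro ⟨y, rfl⟩
    simp [comp_distTriang_mor_zero₁₂ _ hΔ]⟩

theorem exact_rightComp₃ : Function.Exact (Linear.rightComp k T Δ.mor₂)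
    (Linear.rightComp k T Δ.mor₃) :=
  exact_rightComp₂ (rot_of_distTriang _ hΔ) T

theorem exact_rightComp₁ : Function.Exact (Linear.rightComp k T Δ.mor₃)
    (Linear.rightComp k T (Δ.mor₁⟦(1 : ℤ)⟧')) := fun x =>
  ⟨fun hx => (Triangle.coyoneda_exact₁ Δ hΔ x hx).imp fun _ => Eq.symm, by
    rintro ⟨y, rfl⟩
    simp [comp_distTriang_mor_zero₃₁ _ hΔ]⟩

theorem exact_rightComp_shift₂ : Function.Exact (Linear.rightComp k T (Δ.mor₁⟦(1 : ℤ)⟧'))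
    (Linear.rightComp k T (Δ.mor₂⟦(1 : ℤ)⟧')) := fun x =>
  ⟨fun hx => by
    obtain ⟨y, hy⟩ := Triangle.coyoneda_exact₁ _ (rot_of_distTriang _ hΔ) x hx
    exact ⟨-y, (Preadditive.neg_comp _ _).trans ((Preadditive.comp_neg _ _).symm.trans hy.symm)⟩, by
    rintro ⟨y, rfl⟩
    simp [← Functor.map_comp, comp_distTriang_mor_zero₁₂ _ hΔ]⟩

theorem exact_leftComp₂ : Function.Exact (Linear.leftComp k T Δ.mor₂)
    (Linear.leftComp k T Δ.mor₁) := fun x =>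
  ⟨fun hx => (Triangle.yoneda_exact₂ Δ hΔ x hx).imp fun _ => Eq.symm, by
    rintro ⟨y, rfl⟩
    simp [comp_distTriang_mor_zero₁₂_assoc _ hΔ]⟩

theorem exact_leftComp₃ : Function.Exact (Linear.leftComp k T Δ.mor₃)
    (Linear.leftComp k T Δ.mor₂) :=
  exact_leftComp₂ (rot_of_distTriang _ hΔ) T

theorem exact_leftComp₁ : Function.Exact (Linear.leftComp k T (Δ.mor₁⟦(1 : ℤ)⟧'))
    (Linear.leftComp k T Δ.mor₃) := fun x =>
  ⟨fun hx => by
    obtain ⟨y, hy⟩ := Triangle.yoneda_exact₃ _ (rot_of_distTriang _ hΔ) x hx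
    exact ⟨-y, (Preadditive.comp_neg _ _).trans ((Preadditive.neg_comp _ _).symm.trans hy.symm)⟩, by
    rintro ⟨y, rfl⟩
    simp [comp_distTriang_mor_zero₃₁_assoc _ hΔ]⟩

variable [HomFinite k C]

theorem finrank_add_postcompRank_add_postcompRank_shift :
    finrank k (T ⟶ Δ.obj₃) + postcompRank k T Δ.mor₁ + postcompRank k T (Δ.mor₁⟦(1 : ℤ)⟧') =
      finrank k (T ⟶ Δ.obj₂) + finrank k (T ⟶ Δ.obj₁⟦(1 : ℤ)⟧) :=
  finrank_add_finrank_range_of_exact (exact_rightComp₂ hΔ T) (exact_rightComp₃ hΔ T)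
    (exact_rightComp₁ hΔ T)

theorem finrank_add_precompRank_shift_add_precompRank :
    finrank k (Δ.obj₃ ⟶ T) + precompRank k (Δ.mor₁⟦(1 : ℤ)⟧') T + precompRank k Δ.mor₁ T =
      finrank k (Δ.obj₁⟦(1 : ℤ)⟧ ⟶ T) + finrank k (Δ.obj₂ ⟶ T) :=
  finrank_add_finrank_range_of_exact (exact_leftComp₁ hΔ T) (exact_leftComp₃ hΔ T)
    (exact_leftComp₂ hΔ T)

end LongExactSequence

section FiniteType

open Module

/-- `C` is left-bounded if, for all `U` and `A`, the space `Hom(U⟦n⟧, A)` vanishes for all large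
`n`. -/
class LeftBounded (C : Type*) [Category* C] [HasShift C ℤ] : Prop where
  exists_subsingleton (U A : C) : ∃ N : ℕ, ∀ n : ℕ, N ≤ n → Subsingleton (U⟦(n : ℤ)⟧ ⟶ A)

variable {k : Type*} [Field k] {C : Type*} [Category* C] [Preadditive C] [Linear k C]
  [HomFinite k C]

theorem precompRank_le_finrank {U V : C} (f : U ⟶ V) (X : C) :
    precompRank k f X ≤ finrank k (U ⟶ X) :=
  Submodule.finrank_le _

theorem postcompRank_comp_add_postcompRank {T X Y W X' Y' : C} {g : X ⟶ W} {h : W ⟶ X'}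
    {a : Y ⟶ W} {b : W ⟶ Y'}
    (hgh : Function.Exact (Linear.rightComp k T g) (Linear.rightComp k T h))
    (hab : Function.Exact (Linear.rightComp k T a) (Linear.rightComp k T b)) :
    postcompRank k T (g ≫ b) + postcompRank k T a =
      postcompRank k T (a ≫ h) + postcompRank k T g := by
  have hcomp {U V W : C} (u : U ⟶ V) (v : V ⟶ W) :
      Linear.rightComp k T (u ≫ v) = Linear.rightComp k T v ∘ₗ Linear.rightComp k T u := by
    ext; simp
  rw [postcompRank, postcompRank, postcompRank, postcompRank, hcomp, hcomp]
  exact finrank_range_comp_add_finrank_range_of_exact hgh hab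

variable [HasZeroObject C] [HasShift C ℤ] [∀ n : ℤ, (shiftFunctor C n).Additive]
  [Pretriangulated C]

theorem equalRanks_of_finrank_hom_eq [LeftBounded C] {A B : C}
    (hAB : ∀ U, finrank k (U ⟶ A) = finrank k (U ⟶ B)) : EqualRanks k A B := by
  suffices ∀ (N : ℕ) {U V : C} (f : U ⟶ V),
      (∀ n : ℕ, N ≤ n → Subsingleton (U⟦(n : ℤ)⟧ ⟶ A)) →
        precompRank k f A = precompRank k f B from fun U V f =>
    (LeftBounded.exists_subsingleton U A).elim fun N hN => this N f hN
  intro N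
  induction N with
  | zero =>
    intro U V f hU
    have hU₀ : finrank k (U ⟶ A) = 0 := by
      have := hU 0 le_rfl
      have : Subsingleton (U ⟶ A) :=
        (Iso.homFromEquiv ((shiftFunctorZero C ℤ).app U)).symm.subsingleton
      exact finrank_zero_of_subsingleton
    have hA := precompRank_le_finrank (k := k) f A
    have hB := precompRank_le_finrank (k := k) f B
    rw [← hAB] at hB
    lia
  | succ N ih =>
    intro U V f hU
    obtain ⟨K, g, c, hΔ⟩ := distinguished_cocone_triangle f
    have hrank (Z : C) : finrank k (K ⟶ Z) + precompRank k (f⟦(1 : ℤ)⟧') Z + precompRank k f Z =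
        finrank k (U⟦(1 : ℤ)⟧ ⟶ Z) + finrank k (V ⟶ Z) :=
      finrank_add_precompRank_shift_add_precompRank hΔ Z
    have hshift : precompRank k (f⟦(1 : ℤ)⟧') A = precompRank k (f⟦(1 : ℤ)⟧') B :=
      ih _ fun n hn => by
        have := hU (n + 1) (by lia)
        have e := (shiftFunctorAdd' C (1 : ℤ) n (n + 1 : ℕ) (by push_cast; ring)).app U
        exact (Iso.homFromEquiv e).symm.subsingleton
    have hA := hrank A
    have hB := hrank B
    rw [hAB, hAB, hAB] at hA
    lia

theorem nonempty_iso_of_finrank_hom_eq [LeftBounded C] {A B : C}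
    (hAB : ∀ U, finrank k (U ⟶ A) = finrank k (U ⟶ B)) : Nonempty (A ≅ B) :=
  (equalRanks_of_finrank_hom_eq hAB).nonempty_iso

/-- The octahedral axiom at the level of dimensions: the cones `P` and `Q` of the two diagonals
`X ⟶ W ⟶ Y'` and `Y ⟶ W ⟶ X'`. -/
theorem finrank_hom_cone_diagonals {X W X' Y Y' P Q : C}
    {g : X ⟶ W} {h : W ⟶ X'} {l : X' ⟶ X⟦(1 : ℤ)⟧} (hg : Triangle.mk g h l ∈ distTriang C)
    {a : Y ⟶ W} {b : W ⟶ Y'} {c : Y' ⟶ Y⟦(1 : ℤ)⟧} (ha : Triangle.mk a b c ∈ distTriang C)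
    {p : Y' ⟶ P} {p' : P ⟶ X⟦(1 : ℤ)⟧} (hP : Triangle.mk (g ≫ b) p p' ∈ distTriang C)
    {q : X' ⟶ Q} {q' : Q ⟶ Y⟦(1 : ℤ)⟧} (hQ : Triangle.mk (a ≫ h) q q' ∈ distTriang C) (T : C) :
    finrank k (T ⟶ P) = finrank k (T ⟶ Q) := by
  have d := postcompRank_comp_add_postcompRank (exact_rightComp₂ (k := k) hg T)
    (exact_rightComp₂ ha T)
  have d₁ := postcompRank_comp_add_postcompRank (exact_rightComp_shift₂ (k := k) hg T)
    (exact_rightComp_shift₂ ha T)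
  have hrank {U V Z : C} {u : U ⟶ V} {v : V ⟶ Z} {w : Z ⟶ U⟦(1 : ℤ)⟧}
      (hΔ : Triangle.mk u v w ∈ distTriang C) :
      finrank k (T ⟶ Z) + postcompRank k T u + postcompRank k T (u⟦(1 : ℤ)⟧') =
        finrank k (T ⟶ V) + finrank k (T ⟶ U⟦(1 : ℤ)⟧) :=
    finrank_add_postcompRank_add_postcompRank_shift hΔ T
  have eg := hrank hg
  have ea := hrank ha
  have eP := hrank hP
  have eQ := hrank hQ
  simp only [Triangle.mk, Functor.map_comp] at d d₁ eP eQ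
  lia

end FiniteType

section Extensions

variable {C : Type*} [Category* C] [Preadditive C] [HasZeroObject C] [HasShift C ℤ]
  [∀ n : ℤ, (shiftFunctor C n).Additive] [Pretriangulated C]
  {D : Type*} [Category* D] [Preadditive D] [HasZeroObject D] [HasShift D ℤ]
  [∀ n : ℤ, (shiftFunctor D n).Additive] [Pretriangulated D]

/-- `E` is an extension of `W` by `X`: there is a distinguished triangle `X ⟶ E ⟶ W ⟶ X⟦1⟧`. -/
def IsExt (X E W : C) : Prop :=
  ∃ (f : X ⟶ E) (g : E ⟶ W) (h : W ⟶ X⟦(1 : ℤ)⟧), Triangle.mk f g h ∈ distTriang C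

namespace IsExt

theorem of_triangle {Δ : Triangle C} (hΔ : Δ ∈ distTriang C) : IsExt Δ.obj₁ Δ.obj₂ Δ.obj₃ :=
  ⟨Δ.mor₁, Δ.mor₂, Δ.mor₃, hΔ⟩

theorem exists_triangle {X E W : C} (h : IsExt X E W) :
    ∃ Δ ∈ distTriang C, Δ.obj₁ = X ∧ Δ.obj₂ = E ∧ Δ.obj₃ = W :=
  let ⟨_, _, _, hΔ⟩ := h
  ⟨_, hΔ, rfl, rfl, rfl⟩

theorem of_iso {X E W X' E' W' : C} (h : IsExt X E W) (eX : X ≅ X') (eE : E ≅ E')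
    (eW : W ≅ W') : IsExt X' E' W' := by
  obtain ⟨f, g, h, hΔ⟩ := h
  refine ⟨eX.inv ≫ f ≫ eE.hom, eE.inv ≫ g ≫ eW.hom, eW.inv ≫ h ≫ eX.hom⟦(1 : ℤ)⟧',
    isomorphic_distinguished _ hΔ _ (Triangle.isoMk _ _ eX.symm eE.symm eW.symm ?_ ?_ ?_)⟩
  all_goals dsimp only [Triangle.mk, Iso.symm_hom]
  · simp
  · simp
  · simp [← Functor.map_comp]

theorem rotate {X E W : C} (h : IsExt X E W) : IsExt E W (X⟦(1 : ℤ)⟧) := by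
  obtain ⟨Δ, hΔ, rfl, rfl, rfl⟩ := h.exists_triangle
  exact of_triangle (rot_of_distTriang _ hΔ)

theorem invRotate {X E W : C} (h : IsExt X E W) : IsExt (W⟦(-1 : ℤ)⟧) X E := by
  obtain ⟨Δ, hΔ, rfl, rfl, rfl⟩ := h.exists_triangle
  exact of_triangle (inv_rot_of_distTriang _ hΔ)

theorem of_isZero_left {Z : C} (hZ : IsZero Z) (X : C) : IsExt Z X X :=
  (of_triangle (contractible_distinguished₁ X)).of_iso ((isZero_zero C).iso hZ) (Iso.refl _)
    (Iso.refl _)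

theorem split (X Y : C) : IsExt X (X ⊞ Y) Y :=
  of_triangle (binaryBiproductTriangle_distinguished X Y)

theorem nonempty_iso {X E W : C} (h : IsExt X E W) (hW : IsZero W) : Nonempty (X ≅ E) := by
  obtain ⟨f, g, h, hΔ⟩ := h
  have : IsIso f := (Triangle.isZero₃_iff_isIso₁ _ hΔ).1 hW
  exact ⟨asIso f⟩

theorem shift {X E W : C} (h : IsExt X E W) (n : ℤ) : IsExt (X⟦n⟧) (E⟦n⟧) (W⟦n⟧) := by
  obtain ⟨Δ, hΔ, rfl, rfl, rfl⟩ := h.exists_triangle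
  exact of_triangle (Triangle.shift_distinguished _ hΔ n)

theorem map {X E W : C} (h : IsExt X E W) (F : C ⥤ D) [F.CommShift ℤ] [F.IsTriangulated] :
    IsExt (F.obj X) (F.obj E) (F.obj W) := by
  obtain ⟨Δ, hΔ, rfl, rfl, rfl⟩ := h.exists_triangle
  exact of_triangle (F.map_distinguished _ hΔ)

theorem biprod {X E W X' E' W' : C} (h : IsExt X E W) (h' : IsExt X' E' W') :
    IsExt (X ⊞ X') (E ⊞ E') (W ⊞ W') := by
  obtain ⟨Δ, hΔ, rfl, rfl, rfl⟩ := h.exists_triangle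
  obtain ⟨Δ', hΔ', rfl, rfl, rfl⟩ := h'.exists_triangle
  let D : WalkingPair → Triangle C := fun j => j.casesOn Δ Δ'
  have e (Y : WalkingPair → C) : ∏ᶜ Y ≅ Y .left ⊞ Y .right :=
    HasLimit.isoOfNatIso (diagramIsoPair (Discrete.functor Y)) ≪≫ (biprod.isoProd _ _).symm
  exact (of_triangle (productTriangle_distinguished D (by rintro (_ | _) <;> assumption))).of_iso
    (e fun j => (D j).obj₁) (e fun j => (D j).obj₂) (e fun j => (D j).obj₃)

end IsExt

variable (C) in
/-- Iterated extensions in `C` can be re-bracketed: if `E` is an extension of `W` by `X` and `W` is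
an extension of `Z` by `Y`, then `E` is an extension of `Z` by an extension of `Y` by `X`. This is
the part of the octahedral axiom that concerns objects only. -/
class HasAssocExtensions : Prop where
  exists_isExt {X E W Y Z : C} (hE : IsExt X E W) (hW : IsExt Y W Z) :
    ∃ E', IsExt X E' Y ∧ IsExt E' E Z

theorem hasAssocExtensions_of_leftBounded (k : Type*) [Field k] [Linear k C] [HomFinite k C]
    [LeftBounded C] : HasAssocExtensions C where
  exists_isExt := by
    rintro X E W Y Z ⟨f, g, h, hE⟩ ⟨a, b, c, hW⟩
    obtain ⟨P, i, j, hP⟩ := distinguished_cocone_triangle₁ (g ≫ b)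
    obtain ⟨Q, i', j', hQ⟩ := distinguished_cocone_triangle₁ (a ≫ h)
    obtain ⟨e⟩ := nonempty_iso_of_finrank_hom_eq (k := k) fun T =>
      finrank_hom_cone_diagonals (rot_of_distTriang _ hE) hW (rot_of_distTriang _ hP)
        (rot_of_distTriang _ hQ) T
    refine ⟨P, ?_, .of_triangle hP⟩
    exact (IsExt.of_triangle hQ).invRotate.of_iso
      ((shiftFunctorCompIsoId C (1 : ℤ) (-1) (by simp)).app X)
      ((shiftFunctor C (1 : ℤ)).preimageIso e.symm) (Iso.refl _)

end Extensions

section Filtrations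

open LaurentPolynomial

variable {C : Type*} [Category* C] [Preadditive C] [HasZeroObject C] [HasShift C ℤ]
  [∀ n : ℤ, (shiftFunctor C n).Additive] [Pretriangulated C]
  {D : Type*} [Category* D] [Preadditive D] [HasZeroObject D] [HasShift D ℤ]
  [∀ n : ℤ, (shiftFunctor D n).Additive] [Pretriangulated D]

/-- `A` has a finite filtration whose subquotients are shifts of `M`, where the coefficient of `Tⁿ`
in the Laurent polynomial `P` counts the subquotients `M⟦n⟧`. -/
inductive HasFiltration (M : C) : ℕ[T;T⁻¹] → C → Prop
  | zero {A : C} (hA : IsZero A) : HasFiltration M 0 A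
  | step {P : ℕ[T;T⁻¹]} {A' A : C} {n : ℤ} (hA' : HasFiltration M P A')
      (hA : IsExt A' A (M⟦n⟧)) : HasFiltration M (P + T n) A

namespace HasFiltration

theorem of_iso {M : C} {P : ℕ[T;T⁻¹]} {A B : C} (h : HasFiltration M P A) (e : A ≅ B) :
    HasFiltration M P B := by
  cases h with
  | zero hA => exact zero (hA.of_iso e.symm)
  | step hA' hA => exact step hA' (hA.of_iso (Iso.refl _) e (Iso.refl _))

theorem self (M : C) : HasFiltration M 1 M := by
  rw [← zero_add (1 : ℕ[T;T⁻¹]), ← T_zero]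
  exact step (zero (isZero_zero C)) ((IsExt.of_isZero_left (isZero_zero C) M).of_iso (Iso.refl _)
    (Iso.refl _) ((shiftFunctorZero C ℤ).app M).symm)

theorem of_isExt [HasAssocExtensions C] {M : C} {P Q : ℕ[T;T⁻¹]} {X E W : C}
    (hX : HasFiltration M P X) (hW : HasFiltration M Q W) (hE : IsExt X E W) :
    HasFiltration M (P + Q) E := by
  induction hW generalizing E with
  | zero hW =>
    rw [add_zero]
    exact hX.of_iso (hE.nonempty_iso hW).some
  | step _ hW ih =>
    obtain ⟨E', hE', hE⟩ := HasAssocExtensions.exists_isExt hE hW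
    rw [← add_assoc]
    exact step (ih hE') hE

theorem shift {M : C} {P : ℕ[T;T⁻¹]} {A : C} (h : HasFiltration M P A) (n : ℤ) :
    HasFiltration M (P * T n) (A⟦n⟧) := by
  induction h with
  | zero hA =>
    rw [zero_mul]
    exact zero ((shiftFunctor C n).map_isZero hA)
  | step _ hA ih =>
    rw [add_mul, ← T_add]
    exact step ih ((hA.shift n).of_iso (Iso.refl _) (Iso.refl _)
      ((shiftFunctorAdd C _ n).app M).symm)

theorem map {M : C} {P : ℕ[T;T⁻¹]} {A : C} (h : HasFiltration M P A) (F : C ⥤ D)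
    [F.CommShift ℤ] [F.IsTriangulated] : HasFiltration (F.obj M) P (F.obj A) := by
  induction h with
  | zero hA => exact zero (F.map_isZero hA)
  | step _ hA ih =>
    exact step ih ((hA.map F).of_iso (Iso.refl _) (Iso.refl _) ((F.commShiftIso _).app M))

end HasFiltration

/-- The isomorphism `F(X ⊞ Y) ≅ F(X) ⊞ F(Y)` for an additive functor `F`. -/
noncomputable def mapBiprodIso (F : C ⥤ D) [F.Additive] (X Y : C) :
    F.obj (X ⊞ Y) ≅ F.obj X ⊞ F.obj Y :=
  have := preservesBinaryBiproducts_of_preservesBiproducts F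
  F.mapBiprod X Y

/-- `A` is a direct summand of an object filtered by shifts of `M` with multiplicities `P`. -/
def HasSplitFiltration (M : C) (P : ℕ[T;T⁻¹]) (A : C) : Prop :=
  ∃ A', HasFiltration M P (A ⊞ A')

theorem HasFiltration.hasSplitFiltration {M : C} {P : ℕ[T;T⁻¹]} {A : C}
    (h : HasFiltration M P A) : HasSplitFiltration M P A :=
  ⟨_, h.of_iso (isoBiprodZero (isZero_zero C))⟩

namespace HasSplitFiltration

theorem of_iso {M : C} {P : ℕ[T;T⁻¹]} {A B : C} (h : HasSplitFiltration M P A) (e : A ≅ B) :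
    HasSplitFiltration M P B :=
  h.imp fun _ h => h.of_iso (biprod.mapIso e (Iso.refl _))

theorem summand {M : C} {P : ℕ[T;T⁻¹]} {A B : C} (h : HasSplitFiltration M P (A ⊞ B)) :
    HasSplitFiltration M P A :=
  let ⟨_, h⟩ := h
  ⟨_, h.of_iso (biprod.associator _ _ _)⟩

theorem of_isExt [HasAssocExtensions C] {M : C} {P Q : ℕ[T;T⁻¹]} {X E W : C}
    (hX : HasSplitFiltration M P X) (hW : HasSplitFiltration M Q W) (hE : IsExt X E W) :
    HasSplitFiltration M (P + Q) E :=
  let ⟨X', hX⟩ := hX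
  let ⟨W', hW⟩ := hW
  ⟨_, hX.of_isExt hW (hE.biprod (IsExt.split X' W'))⟩

theorem map {M : C} {P : ℕ[T;T⁻¹]} {A : C} (h : HasSplitFiltration M P A) (F : C ⥤ D)
    [F.CommShift ℤ] [F.IsTriangulated] : HasSplitFiltration (F.obj M) P (F.obj A) :=
  let ⟨_, h⟩ := h
  ⟨_, (h.map F).of_iso (mapBiprodIso F _ _)⟩

theorem shift {M : C} {P : ℕ[T;T⁻¹]} {A : C} (h : HasSplitFiltration M P A) (n : ℤ) :
    HasSplitFiltration M (P * T n) (A⟦n⟧) :=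
  let ⟨_, h⟩ := h
  ⟨_, (h.shift n).of_iso (mapBiprodIso (shiftFunctor C n) _ _)⟩

theorem trans [HasAssocExtensions C] {L M N : C} {P Q : ℕ[T;T⁻¹]}
    (hM : HasSplitFiltration L P M) (hN : HasSplitFiltration M Q N) :
    HasSplitFiltration L (P * Q) N := by
  obtain ⟨N', hN⟩ := hN
  suffices ∀ {Q A}, HasFiltration M Q A → HasSplitFiltration L (P * Q) A from (this hN).summand
  intro Q A hA
  induction hA with
  | zero hA =>
    rw [mul_zero]
    exact (HasFiltration.zero hA).hasSplitFiltration
  | step _ hA ih =>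
    rw [mul_add]
    exact ih.of_isExt (hM.shift _) hA

end HasSplitFiltration

theorem isThick_setOf_hasSplitFiltration [HasAssocExtensions C] (M : C) :
    IsThick C {N | ∃ P, HasSplitFiltration M P N} where
  mem_of_iso := fun e ⟨_, h⟩ => ⟨_, h.of_iso e⟩
  shift_mem := fun _ n ⟨_, h⟩ => ⟨_, h.shift n⟩
  cone_mem := fun _ hΔ ⟨_, h₁⟩ ⟨_, h₂⟩ =>
    ⟨_, h₂.of_isExt (h₁.shift 1) (IsExt.of_triangle hΔ).rotate⟩
  summand_mem := fun _ _ ⟨_, h⟩ => ⟨_, h.summand⟩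

end Filtrations

section Thick

open LaurentPolynomial

variable {C : Type u} [Category.{v} C] [Preadditive C] [HasZeroObject C] [HasShift C ℤ]
  [∀ n : ℤ, (shiftFunctor C n).Additive] [Pretriangulated C]
  {D : Type u₂} [Category.{v₂} D] [Preadditive D] [HasZeroObject D] [HasShift D ℤ]
  [∀ n : ℤ, (shiftFunctor D n).Additive] [Pretriangulated D]

theorem IsThick.mem_of_isZero {S : Set C} (hS : IsThick C S) {X Z : C} (hX : X ∈ S)
    (hZ : IsZero Z) : Z ∈ S :=
  hS.mem_of_iso ((isZero_zero C).iso hZ)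
    (hS.cone_mem _ (contractible_distinguished X) hX hX)

theorem IsThick.mem_of_isExt {S : Set C} (hS : IsThick C S) {X E W : C} (hX : X ∈ S) (hW : W ∈ S)
    (hE : IsExt X E W) : E ∈ S := by
  obtain ⟨f, g, h, hΔ⟩ := hE.invRotate
  exact hS.cone_mem _ hΔ (hS.shift_mem W (-1) hW) hX

theorem HasFiltration.mem_of_isThick {S : Set C} (hS : IsThick C S) {M : C} (hM : M ∈ S)
    {P : ℕ[T;T⁻¹]} {A : C} (h : HasFiltration M P A) : A ∈ S := by
  induction h with
  | zero hA => exact hS.mem_of_isZero hM hA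
  | step _ hA ih => exact hS.mem_of_isExt ih (hS.shift_mem M _ hM) hA

theorem mem_thickClosure_iff [HasAssocExtensions C] {M N : C} :
    N ∈ thickClosure C M ↔ ∃ P, HasSplitFiltration M P N := by
  constructor
  · intro hN
    exact hN _ ⟨isThick_setOf_hasSplitFiltration M, 1, (HasFiltration.self M).hasSplitFiltration⟩
  · rintro ⟨P, N', h⟩ S ⟨hS, hM⟩
    exact hS.summand_mem N N' (h.mem_of_isThick hS hM)

theorem IsThick.preimage {S : Set D} (hS : IsThick D S) (F : C ⥤ D) [F.CommShift ℤ]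
    [F.IsTriangulated] : IsThick C (F.obj ⁻¹' S) where
  mem_of_iso e := hS.mem_of_iso (F.mapIso e)
  shift_mem X n hX := hS.mem_of_iso ((F.commShiftIso n).app X).symm (hS.shift_mem _ n hX)
  cone_mem _ hΔ := hS.cone_mem _ (F.map_distinguished _ hΔ)
  summand_mem X Y h := hS.summand_mem _ _ (hS.mem_of_iso (mapBiprodIso F X Y) h)

theorem obj_mem_thickClosure (F : C ⥤ D) [F.CommShift ℤ] [F.IsTriangulated] {M N : C}
    (h : N ∈ thickClosure C M) : F.obj N ∈ thickClosure D (F.obj M) :=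
  fun _ ⟨hS, hM⟩ => h _ ⟨hS.preimage F, hM⟩

end Thick

section FiniteTypeComplex

variable {C : Type u} [Category.{v} C] [Preadditive C] [HasShift C ℤ] [Linear ℂ C]

theorem IsFiniteType.homFinite (hft : IsFiniteType C) : HomFinite ℂ C where
  finite X Y :=
    have := (hft X Y).2 0
    Module.Finite.equiv (Linear.homCongr ℂ (Iso.refl X) ((shiftFunctorZero C ℤ).app Y))

theorem IsFiniteType.leftBounded (hft : IsFiniteType C) : LeftBounded C where
  exists_subsingleton U A := by
    obtain ⟨m, hm⟩ := (hft U A).1.bddBelow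
    refine ⟨(1 - m).toNat, fun n hn => ?_⟩
    have : Subsingleton (U ⟶ A⟦(-n : ℤ)⟧) := by
      by_contra h
      have := hm h
      lia
    have : Subsingleton (U ⟶ (shiftEquiv C (n : ℤ)).inverse.obj A) := this
    exact ((shiftEquiv C (n : ℤ)).toAdjunction.homEquiv U A).subsingleton

theorem IsFiniteType.hasAssocExtensions [HasZeroObject C] [∀ n : ℤ, (shiftFunctor C n).Additive]
    [Pretriangulated C] (hft : IsFiniteType C) : HasAssocExtensions C :=
  have := hft.homFinite
  have := hft.leftBounded
  hasAssocExtensions_of_leftBounded ℂ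

end FiniteTypeComplex

section Complexity

open LaurentPolynomial

variable {C : Type u} [Category.{v} C] [Preadditive C] [HasZeroObject C] [HasShift C ℤ]
  [∀ n : ℤ, (shiftFunctor C n).Additive] [Pretriangulated C]

/-- A filtration of `B` as in the definition of `complexity`: `p` steps, the `i`-th of which is an
extension by `M⟦n i⟧`. -/
def IsFiltration (M B : C) {p : ℕ} (n : Fin p → ℤ) (A : Fin (p + 1) → C) : Prop :=
  IsZero (A 0) ∧ Nonempty (A (Fin.last p) ≅ B) ∧
    ∀ i : Fin p, IsExt (A i.castSucc) (A i.succ) (M⟦n i⟧)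

theorem IsFiltration.hasFiltration {M B : C} {p : ℕ} {n : Fin p → ℤ} {A : Fin (p + 1) → C}
    (h : IsFiltration M B n A) : HasFiltration M (∑ i, T (n i)) B := by
  obtain ⟨h₀, ⟨e⟩, hA⟩ := h
  refine HasFiltration.of_iso ?_ e
  clear e
  induction p with
  | zero => simpa using HasFiltration.zero h₀
  | succ p ih =>
    rw [Fin.sum_univ_castSucc]
    exact (ih (A := fun i => A i.castSucc) h₀ fun i => hA i.castSucc).step (hA (Fin.last p))

theorem IsFiltration.snoc {M B B' : C} {p : ℕ} {n : Fin p → ℤ} {A : Fin (p + 1) → C} {m : ℤ}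
    (h : IsFiltration M B' n A) (hB : IsExt B' B (M⟦m⟧)) :
    IsFiltration M B (Fin.snoc n m : Fin (p + 1) → ℤ) (Fin.snoc A B : Fin (p + 1 + 1) → C) := by
  obtain ⟨h₀, ⟨e⟩, hA⟩ := h
  refine ⟨?_, ⟨eqToIso (Fin.snoc_last _ _)⟩, fun i => ?_⟩
  · rw [← Fin.castSucc_zero, Fin.snoc_castSucc]
    exact h₀
  · induction i using Fin.lastCases with
    | last =>
      simp only [Fin.snoc_castSucc, Fin.succ_last, Fin.snoc_last]
      exact hB.of_iso e.symm (Iso.refl _) (Iso.refl _)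
    | cast i =>
      simp only [Fin.succ_castSucc, Fin.snoc_castSucc]
      exact hA i

theorem HasFiltration.exists_isFiltration {M B : C} {P : ℕ[T;T⁻¹]} (h : HasFiltration M P B) :
    ∃ (p : ℕ) (n : Fin p → ℤ) (A : Fin (p + 1) → C),
      IsFiltration M B n A ∧ P = ∑ i, T (n i) := by
  induction h with
  | @zero B hB => exact ⟨0, Fin.elim0, fun _ => B, ⟨hB, ⟨Iso.refl B⟩, fun i => i.elim0⟩, by simp⟩
  | step _ hB ih =>
    obtain ⟨p, n, A, hA, rfl⟩ := ih
    exact ⟨p + 1, _, _, hA.snoc hB, by simp [Fin.sum_univ_castSucc]⟩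

/-- The weight `∑ aₙ exp(n t)` of a Laurent polynomial `∑ aₙ Tⁿ`. -/
noncomputable def weight (t : ℝ) : ℕ[T;T⁻¹] →+* ℝ≥0∞ :=
  ENNReal.ofNNRealHom.comp <| eval₂ (Nat.castRingHom NNReal)
    (Units.mk0 (Real.exp t).toNNReal (Real.toNNReal_pos.2 (Real.exp_pos t)).ne')

theorem weight_T (t : ℝ) (n : ℤ) : weight t (T n) = ENNReal.ofReal (Real.exp (n * t)) := by
  rw [weight, RingHom.comp_apply, eval₂_T, Units.val_zpow_eq_zpow_val, Units.val_mk0,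
    mul_comm, Real.exp_mul, Real.rpow_intCast, ← Real.coe_toNNReal _ (Real.exp_pos t).le,
    ← NNReal.coe_zpow, ENNReal.ofReal_coe_nnreal, Real.toNNReal_coe]
  rfl

theorem weight_ne_top (t : ℝ) (P : ℕ[T;T⁻¹]) : weight t P ≠ ⊤ :=
  ENNReal.coe_ne_top

theorem complexity_le_weight [HasAssocExtensions C] (t : ℝ) {M N : C} {P : ℕ[T;T⁻¹]}
    (h : HasSplitFiltration M P N) : complexity C t M N ≤ weight t P := by
  by_cases hN : IsZero N
  · rw [complexity, if_pos hN]
    exact zero_le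
  rw [complexity, if_neg hN, if_pos (mem_thickClosure_iff.2 ⟨P, h⟩)]
  obtain ⟨N', h⟩ := h
  obtain ⟨p, n, A, ⟨h₀, e, hA⟩, rfl⟩ := h.exists_isFiltration
  have hp : 0 < p := by
    rw [Nat.pos_iff_ne_zero]
    rintro rfl
    exact hN (IsZero.of_mono biprod.inl (h₀.of_iso e.some.symm))
  exact sInf_le ⟨p, hp, n, A, N', h₀, e, hA, by simp only [map_sum, weight_T]⟩

theorem complexity_eq_iInf_weight [HasAssocExtensions C] (t : ℝ) (M N : C) :
    complexity C t M N = ⨅ (P : ℕ[T;T⁻¹]) (_ : HasSplitFiltration M P N), weight t P := by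
  refine le_antisymm (le_iInf₂ fun P hP => complexity_le_weight t hP) ?_
  rw [complexity]
  split_ifs with hN hNM
  · exact (iInf₂_le 0 (HasFiltration.zero hN).hasSplitFiltration).trans (map_zero _).le
  · refine le_sInf ?_
    rintro _ ⟨p, -, n, A, N', h₀, e, hA, rfl⟩
    exact (iInf₂_le _ ⟨N', IsFiltration.hasFiltration ⟨h₀, e, hA⟩⟩).trans
      (by simp only [map_sum, weight_T, le_refl])
  · exact le_top

theorem complexity_ne_top [HasAssocExtensions C] (t : ℝ) {M N : C} (h : N ∈ thickClosure C M) :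
    complexity C t M N ≠ ⊤ := by
  obtain ⟨P, hP⟩ := mem_thickClosure_iff.1 h
  exact ne_top_of_le_ne_top (weight_ne_top t P) (complexity_le_weight t hP)

theorem complexity_le_mul [HasAssocExtensions C] (t : ℝ) {L M N : C} (hM : M ∈ thickClosure C L)
    (hN : N ∈ thickClosure C M) :
    complexity C t L N ≤ complexity C t L M * complexity C t M N := by
  refine ENNReal.le_mul_of_forall_lt (Or.inr (complexity_ne_top t hN))
    (Or.inl (complexity_ne_top t hM)) fun a ha b hb => ?_
  simp only [complexity_eq_iInf_weight, gt_iff_lt, iInf_lt_iff] at ha hb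
  obtain ⟨P, hP, ha⟩ := ha
  obtain ⟨Q, hQ, hb⟩ := hb
  calc complexity C t L N ≤ weight t (P * Q) := complexity_le_weight t (hP.trans hQ)
    _ = weight t P * weight t Q := map_mul _ _ _
    _ ≤ a * b := by gcongr

variable {D : Type u₂} [Category.{v₂} D] [Preadditive D] [HasZeroObject D] [HasShift D ℤ]
  [∀ n : ℤ, (shiftFunctor D n).Additive] [Pretriangulated D]

theorem complexity_map_le [HasAssocExtensions C] [HasAssocExtensions D] (t : ℝ) (M N : C)
    (F : C ⥤ D) [F.CommShift ℤ] [F.IsTriangulated] :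
    complexity D t (F.obj M) (F.obj N) ≤ complexity C t M N := by
  rw [complexity_eq_iInf_weight t M N]
  exact le_iInf₂ fun P hP => complexity_le_weight t (hP.map F)

end Complexity

section ExpGrowth

open ExpGrowth

theorem expGrowthSup_le_of_succ_le_const_mul {a b : ℕ → ℝ≥0∞} {K : ℝ≥0∞} (hK : K ≠ ⊤)
    (h : ∀ n, a (n + 1) ≤ K * b n) : expGrowthSup a ≤ expGrowthSup b := by
  refine EReal.le_of_forall_lt_iff_le.1 fun c hc => ?_
  suffices ∀ᶠ n : ℕ in atTop, a n ≤ K * EReal.exp (-c : ℝ) * EReal.exp (c * n) by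
    refine (expGrowthSup_le_of_eventually_le (ENNReal.mul_ne_top hK ?_) this).trans_eq
      expGrowthSup_exp
    simp
  rw [← map_add_atTop_eq_nat 1, eventually_map]
  filter_upwards [eventually_le_exp hc] with n hn
  calc a (n + 1) ≤ K * EReal.exp (c * n) := (h n).trans (by gcongr)
    _ = K * EReal.exp (-c : ℝ) * EReal.exp (c * (n + 1 : ℕ)) := by
      rw [mul_assoc, ← EReal.exp_add]
      norm_cast
      congr 3
      push_cast
      ring

end ExpGrowth

section Iterates

theorem iter_comp_succ_obj {C : Type u} [Category.{v} C] (F₁ F₂ : C ⥤ C) (X : C) (n : ℕ) :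
    (iter C (F₂ ⋙ F₁) (n + 1)).obj X = F₁.obj ((iter C (F₁ ⋙ F₂) n).obj (F₂.obj X)) := by
  induction n with
  | zero => rfl
  | succ n ih => exact congrArg (F₂ ⋙ F₁).obj ih

variable {C : Type u} [Category.{v} C] [Preadditive C] [HasZeroObject C] [HasShift C ℤ]
  [∀ n : ℤ, (shiftFunctor C n).Additive] [Pretriangulated C] (F : C ⥤ C) [F.CommShift ℤ]
  [F.IsTriangulated]

theorem iter_obj_mem_thickClosure {M N : C} (h : N ∈ thickClosure C M) (n : ℕ) :
    (iter C F n).obj N ∈ thickClosure C ((iter C F n).obj M) := by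
  induction n with
  | zero => exact h
  | succ n ih => exact obj_mem_thickClosure F ih

theorem complexity_iter_le [HasAssocExtensions C] (t : ℝ) (M N : C) (n : ℕ) :
    complexity C t ((iter C F n).obj M) ((iter C F n).obj N) ≤ complexity C t M N := by
  induction n with
  | zero => exact le_rfl
  | succ n ih => exact (complexity_map_le t _ _ F).trans ih

end Iterates

section Entropy

open ExpGrowth

variable {C : Type u} [Category.{v} C] [Preadditive C] [HasZeroObject C] [HasShift C ℤ]
  [∀ n : ℤ, (shiftFunctor C n).Additive] [Pretriangulated C]

theorem entropy_eq_expGrowthSup (F : C ⥤ C) (G : C) (t : ℝ) :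
    entropy C F G t = expGrowthSup fun n => complexity C t G ((iter C F n).obj G) := by
  refine congrArg (limsup · atTop) (funext fun n => ?_)
  rw [mul_comm, EReal.coe_inv, EReal.div_eq_inv_mul, mul_comm]
  rfl

variable [HasAssocExtensions C] {G : C} (hG : IsSplitGenerator C G) (F₁ F₂ : C ⥤ C)
  [F₁.CommShift ℤ] [F₁.IsTriangulated] [F₂.CommShift ℤ] [F₂.IsTriangulated] (t : ℝ)

include hG

theorem complexity_iter_comp_succ_le (n : ℕ) :
    complexity C t G ((iter C (F₂ ⋙ F₁) (n + 1)).obj G) ≤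
      complexity C t G (F₁.obj G) * complexity C t G (F₂.obj G) *
        complexity C t G ((iter C (F₁ ⋙ F₂) n).obj G) := by
  set H := iter C (F₁ ⋙ F₂) n
  calc complexity C t G ((iter C (F₂ ⋙ F₁) (n + 1)).obj G)
      = complexity C t G (F₁.obj (H.obj (F₂.obj G))) := by rw [iter_comp_succ_obj]
    _ ≤ complexity C t G (F₁.obj G) * complexity C t (F₁.obj G) (F₁.obj (H.obj (F₂.obj G))) :=
      complexity_le_mul t (hG _) (obj_mem_thickClosure F₁ (hG _))
    _ ≤ complexity C t G (F₁.obj G) * complexity C t G (H.obj (F₂.obj G)) := by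
      gcongr
      exact complexity_map_le t _ _ F₁
    _ ≤ complexity C t G (F₁.obj G) *
        (complexity C t G (H.obj G) * complexity C t (H.obj G) (H.obj (F₂.obj G))) := by
      gcongr
      exact complexity_le_mul t (hG _) (iter_obj_mem_thickClosure (F₁ ⋙ F₂) (hG _) n)
    _ ≤ complexity C t G (F₁.obj G) *
        (complexity C t G (H.obj G) * complexity C t G (F₂.obj G)) := by
      gcongr
      exact complexity_iter_le (F₁ ⋙ F₂) t _ _ n
    _ = _ := by ring

theorem entropy_comp_le : entropy C (F₂ ⋙ F₁) G t ≤ entropy C (F₁ ⋙ F₂) G t := by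
  rw [entropy_eq_expGrowthSup, entropy_eq_expGrowthSup]
  exact expGrowthSup_le_of_succ_le_const_mul
    (ENNReal.mul_ne_top (complexity_ne_top t (hG _)) (complexity_ne_top t (hG _)))
    (complexity_iter_comp_succ_le hG F₁ F₂ t)

end Entropy

theorem statement_10_general {C : Type u} [Category.{v} C] [Preadditive C] [HasZeroObject C]
    [HasShift C ℤ] [∀ n : ℤ, (shiftFunctor C n).Additive] [Pretriangulated C]
    [HasAssocExtensions C] {G : C} (hG : IsSplitGenerator C G) (F₁ F₂ : C ⥤ C)
    [F₁.CommShift ℤ] [F₁.IsTriangulated] [F₂.CommShift ℤ] [F₂.IsTriangulated] (t : ℝ) :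
    entropy C (F₂ ⋙ F₁) G t = entropy C (F₁ ⋙ F₂) G t :=
  le_antisymm (entropy_comp_le hG F₁ F₂ t) (entropy_comp_le hG F₂ F₁ t)

/-- `h_t(F₁ F₂) = h_t(F₂ F₁)` (here `F₁ F₂ = F₂ ⋙ F₁`). -/
theorem statement_10 {C : Type u} [Category.{v} C] [Preadditive C] [HasZeroObject C]
    [HasShift C ℤ] [∀ n : ℤ, (shiftFunctor C n).Additive] [Pretriangulated C] [Linear ℂ C]
    (hC : ∃ X : C, ¬ IsZero X) (hft : IsFiniteType C)
    (G : C) (hG : IsSplitGenerator C G)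
    (F₁ : C ⥤ C) [F₁.Additive] [F₁.Linear ℂ] [F₁.CommShift ℤ] [F₁.IsTriangulated]
    (F₂ : C ⥤ C) [F₂.Additive] [F₂.Linear ℂ] [F₂.CommShift ℤ] [F₂.IsTriangulated]
    (h₁₂ : ∀ n : ℕ, ¬ IsZero ((iter C (F₂ ⋙ F₁) n).obj G))
    (h₂₁ : ∀ n : ℕ, ¬ IsZero ((iter C (F₁ ⋙ F₂) n).obj G))
    (t : ℝ) :
    entropy C (F₂ ⋙ F₁) G t = entropy C (F₁ ⋙ F₂) G t := by
  have := hft.hasAssocExtensions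
  exact statement_10_general hG F₁ F₂ t

end CatEntropy
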